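/- If X is a quantum-Wajsberg algebra, then the relation ≤_Q is a partial order on X (i.e., ≤_Q is reflexive, antisymmetric, and transitive). -/

import Mathlib

/-!
Put `x ⊙ y = (x → y*)*`. This is a commutative monoid operation with `(x ⊙ y) → z = x → (y → z)`,
and `x ∧ y = y ⊙ (y → x)`; so `x ≤_Q y` says `x = y ⊙ (y → x)`, which implies `x ≤ y`. Moreover
`x ≤ y` gives `y ∧ x = x ⊙ 1 = x`, whence antisymmetry.

For transitivity let `x ≤_Q y ≤_Q z`. Then `x ≤ z`, so `z ∧ x = x`, and (QW) reads
`(z → x) ∧ (z → y) = z → ((z ∧ x) ∧ (y ∧ z)) = z → (x ∧ y) = z → x`, that is, `z → x ≤_Q z → y`.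
Multiplying by `z` gives
`z ⊙ (z → x) = (z ⊙ (z → y)) ⊙ ((z → y) → (z → x)) = y ⊙ (y → x) = x`.
-/

/-- A bounded involutive BE algebra. -/
class InvBE (X : Type*) where
  imp : X → X → X
  one : X
  zero : X
  be1 : ∀ x : X, imp x x = one
  be2 : ∀ x : X, imp x one = one
  be3 : ∀ x : X, imp one x = x
  be4 : ∀ x y z : X, imp x (imp y z) = imp y (imp x z)
  bound : ∀ x : X, imp zero x = one
  dn : ∀ x : X, imp (imp x zero) zero = x

namespace InvBE

variable {X : Type*} [InvBE X]

/-- Negation: `x* = x → 0`. -/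
def neg (x : X) : X := imp x zero

/-- `x ∨ y = (x → y) → y`. -/
def sup (x y : X) : X := imp (imp x y) y

/-- `x ∧ y = ((x* → y*) → y*)*`. -/
def inf (x y : X) : X := neg (imp (imp (neg x) (neg y)) (neg y))

/-- `x ≤ y` iff `x → y = 1`. -/
def le (x y : X) : Prop := imp x y = one

/-- `x ≤_Q y` iff `x = x ∧ y`. -/
def leQ (x y : X) : Prop := x = inf x y

end InvBE

namespace InvBE

variable {X : Type*} [InvBE X] {x y z : X}

protected theorem neg_neg (x : X) : neg (neg x) = x := dn x

theorem imp_neg_comm (x y : X) : imp x (neg y) = imp y (neg x) := be4 x y zero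

theorem neg_imp_neg (x y : X) : imp (neg x) (neg y) = imp y x := by
  rw [imp_neg_comm, InvBE.neg_neg]

/-- The product `x ⊙ y = (x → y*)*`, the operation residuated by `→`. -/
def mul (x y : X) : X := neg (imp x (neg y))

protected theorem neg_mul (x y : X) : neg (mul x y) = imp x (neg y) := InvBE.neg_neg _

protected theorem mul_comm (x y : X) : mul x y = mul y x := congrArg neg (imp_neg_comm x y)

protected theorem mul_one (x : X) : mul x one = x := by
  rw [InvBE.mul_comm, mul, be3, InvBE.neg_neg]

theorem mul_imp (x y z : X) : imp (mul x y) z = imp x (imp y z) :=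
  calc imp (mul x y) z
    _ = imp (neg z) (neg (mul x y)) := (neg_imp_neg z (mul x y)).symm
    _ = imp x (imp (neg z) (neg y)) := by rw [InvBE.neg_mul, be4]
    _ = imp x (imp y z) := by rw [neg_imp_neg]

protected theorem mul_assoc (x y z : X) : mul (mul x y) z = mul x (mul y z) := by
  rw [mul, mul_imp, ← InvBE.neg_mul, ← mul]

theorem inf_eq_mul_imp (x y : X) : inf x y = mul y (imp y x) := by
  rw [InvBE.mul_comm, inf, neg_imp_neg, ← mul]

theorem inf_eq_right_of_le (h : le y x) : inf x y = y := by
  rw [inf_eq_mul_imp, show imp y x = one from h, InvBE.mul_one]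

theorem leQ_iff_mul_imp_eq : leQ x y ↔ mul y (imp y x) = x := by
  rw [leQ, inf_eq_mul_imp, eq_comm]

theorem leQ_refl (x : X) : leQ x x := (inf_eq_right_of_le (be1 x)).symm

theorem leQ.trans_le (hxy : leQ x y) (hyz : le y z) : le x z :=
  calc imp x z
    _ = imp (mul (imp y x) y) z := by rw [InvBE.mul_comm, leQ_iff_mul_imp_eq.mp hxy]
    _ = imp (imp y x) (imp y z) := mul_imp _ _ _
    _ = one := by rw [show imp y z = one from hyz, be2]

theorem leQ.le (h : leQ x y) : le x y := h.trans_le (be1 y)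

theorem leQ.antisymm (hxy : leQ x y) (hyx : leQ y x) : x = y :=
  (hyx.trans (inf_eq_right_of_le hxy.le)).symm

theorem leQ.trans_of_imp (hxy : leQ x y) (hyz : leQ y z) (himp : leQ (imp z x) (imp z y)) :
    leQ x z := by
  rw [leQ_iff_mul_imp_eq] at *
  have residuation : imp (imp z y) (imp z x) = imp y x := by
    rw [← mul_imp, InvBE.mul_comm, hyz]
  calc mul z (imp z x)
    _ = mul z (mul (imp z y) (imp (imp z y) (imp z x))) := by rw [himp]
    _ = mul (mul z (imp z y)) (imp y x) := by rw [residuation, InvBE.mul_assoc]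
    _ = x := by rw [hyz, hxy]

variable (X) in
/-- The axiom (QW), which singles out the quantum-Wajsberg algebras among the involutive BE
algebras. -/
def IsQuantumWajsberg : Prop :=
  ∀ x y z : X, imp x (inf (inf x y) (inf z x)) = inf (imp x y) (imp x z)

theorem IsQuantumWajsberg.leQ_imp_imp (qw : IsQuantumWajsberg X) (hxy : leQ x y)
    (hyz : leQ y z) : leQ (imp z x) (imp z y) :=
  calc imp z x
    _ = imp z (inf x y) := congrArg (imp z) hxy
    _ = imp z (inf (inf z x) (inf y z)) := by
      rw [inf_eq_right_of_le (hxy.trans_le hyz.le), show inf y z = y from hyz.symm]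
    _ = inf (imp z x) (imp z y) := qw z x y

theorem IsQuantumWajsberg.leQ_trans (qw : IsQuantumWajsberg X) (hxy : leQ x y)
    (hyz : leQ y z) : leQ x z :=
  hxy.trans_of_imp hyz (qw.leQ_imp_imp hxy hyz)

end InvBE

open InvBE in
theorem stmt_8 {X : Type*} [InvBE X]
    (qw : ∀ x y z : X, imp x (inf (inf x y) (inf z x)) = inf (imp x y) (imp x z)) :
    (∀ x : X, leQ x x) ∧
    (∀ x y : X, leQ x y → leQ y x → x = y) ∧
    (∀ x y z : X, leQ x y → leQ y z → leQ x z) :=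
  have hX : IsQuantumWajsberg X := qw
  ⟨leQ_refl, fun _ _ => leQ.antisymm, fun _ _ _ => hX.leQ_trans⟩
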